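/- arXiv:2512.21517 — 2 statements merged into one kernel-verified Lean document; each statement's English description precedes it below -/
import Mathlib

section
/- ∫_0^{π/2} t·log(cos t) dt = −(π²/8)·log 2 − (7/16)·ζ(3). -/
open Real

/-!
For `0 ≤ r < 1`, the real part of the Taylor series of `log (1 + r * exp (2 * t * I))` is
`log ‖1 + r * exp (2 * t * I)‖ = ∑ (-1) ^ (n + 1) / n * r ^ n * cos (n * (2 * t))`, and it may be
integrated term by term against a weight. As `r → 1⁻` the left-hand side tends to
`log 2 + log |cos t|`, dominated by `log 2 + |log |cos t||`, while the series on the right-hand side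
is handled by Abel's limit theorem. So `∫ w * log cos` is read off the cosine moments of `w`; for
`w t = t` these leave only the odd terms of the series for `ζ(3)`.
-/

open Filter Topology MeasureTheory Set

section LogNorm

theorem hasSum_log_norm_one_add_mul_exp {r : ℝ} (hr : |r| < 1) (θ : ℝ) :
    HasSum (fun n : ℕ ↦ (-1) ^ (n + 1) / n * r ^ n * cos (n * θ))
      (log ‖1 + r * Complex.exp (θ * Complex.I)‖) := by
  have hz : ‖r * Complex.exp (θ * Complex.I)‖ < 1 := by
    rwa [norm_mul, Complex.norm_exp_ofReal_mul_I, mul_one, Complex.norm_real]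
  rw [← Complex.log_re]
  refine (Complex.hasSum_re (Complex.hasSum_taylorSeries_log hz)).congr_fun fun n ↦ ?_
  have hterm : (-1) ^ (n + 1) * (r * Complex.exp (θ * Complex.I)) ^ n / n =
      ((-1) ^ (n + 1) / n * r ^ n : ℝ) * Complex.exp ((n * θ : ℝ) * Complex.I) := by
    rw [mul_pow, ← Complex.exp_nat_mul]
    push_cast
    ring_nf
  rw [hterm, Complex.re_ofReal_mul, Complex.exp_ofReal_mul_I_re]

theorem norm_one_add_mul_exp_two_mul (r t : ℝ) :
    ‖1 + r * Complex.exp ((2 * t : ℝ) * Complex.I)‖ =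
      ‖Complex.exp ((-t : ℝ) * Complex.I) + r * Complex.exp (t * Complex.I)‖ := by
  have hfactor : 1 + r * Complex.exp ((2 * t : ℝ) * Complex.I) = Complex.exp (t * Complex.I) *
      (Complex.exp ((-t : ℝ) * Complex.I) + r * Complex.exp (t * Complex.I)) := by
    rw [mul_add, mul_left_comm, ← Complex.exp_add, ← Complex.exp_add, ← add_mul, ← add_mul]
    norm_cast
    rw [add_neg_cancel, Complex.ofReal_zero, zero_mul, Complex.exp_zero, two_mul]
  rw [hfactor, norm_mul, Complex.norm_exp_ofReal_mul_I, one_mul]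

theorem abs_one_add_mul_cos_le_norm (r t : ℝ) :
    |(1 + r) * cos t| ≤ ‖1 + r * Complex.exp ((2 * t : ℝ) * Complex.I)‖ := by
  rw [norm_one_add_mul_exp_two_mul]
  refine le_of_eq_of_le ?_ (Complex.abs_re_le_norm _)
  rw [Complex.add_re, Complex.re_ofReal_mul, Complex.exp_ofReal_mul_I_re,
    Complex.exp_ofReal_mul_I_re, cos_neg, one_add_mul]

theorem norm_one_add_exp_two_mul (t : ℝ) :
    ‖1 + Complex.exp ((2 * t : ℝ) * Complex.I)‖ = 2 * |cos t| := by
  have h := norm_one_add_mul_exp_two_mul 1 t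
  rw [Complex.ofReal_one, one_mul, one_mul] at h
  rw [h, add_comm, Complex.ofReal_neg, ← Complex.two_cos, ← Complex.ofReal_cos, norm_mul,
    Complex.norm_two, Complex.norm_real, norm_eq_abs]

-- `Real.log` is even, so `log (cos t)` stands for `log |cos t|` where the cosine is negative.
theorem abs_log_norm_one_add_mul_exp_le {r t : ℝ} (hr₀ : 0 ≤ r) (hr₁ : r ≤ 1) (ht : cos t ≠ 0) :
    |log ‖1 + r * Complex.exp ((2 * t : ℝ) * Complex.I)‖| ≤ log 2 + |log (cos t)| := by
  set N := ‖1 + r * Complex.exp ((2 * t : ℝ) * Complex.I)‖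
  have hcos : 0 < |cos t| := abs_pos.mpr ht
  have hlower : |cos t| ≤ N := by
    refine le_trans ?_ (abs_one_add_mul_cos_le_norm r t)
    rw [abs_mul]
    exact le_mul_of_one_le_left hcos.le (by rw [abs_of_nonneg] <;> linarith)
  have hupper : N ≤ 2 := by
    refine (norm_add_le _ _).trans ?_
    rw [norm_one, norm_mul, Complex.norm_exp_ofReal_mul_I, Complex.norm_of_nonneg hr₀]
    linarith
  have hlog_lower : log (cos t) ≤ log N := log_abs (cos t) ▸ log_le_log hcos hlower
  have hlog_upper : log N ≤ log 2 := log_le_log (hcos.trans_le hlower) hupper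
  have hlog_two : 0 ≤ log 2 := log_nonneg one_le_two
  exact abs_le.mpr ⟨by linarith [neg_abs_le (log (cos t))], by linarith [abs_nonneg (log (cos t))]⟩

theorem tendsto_log_norm_one_add_mul_exp {t : ℝ} (ht : cos t ≠ 0) :
    Tendsto (fun r : ℝ ↦ log ‖1 + r * Complex.exp ((2 * t : ℝ) * Complex.I)‖) (𝓝 1)
      (𝓝 (log 2 + log (cos t))) := by
  have hlim : log ‖1 + (1 : ℝ) * Complex.exp ((2 * t : ℝ) * Complex.I)‖ =
      log 2 + log (cos t) := by
    rw [Complex.ofReal_one, one_mul, norm_one_add_exp_two_mul,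
      log_mul two_ne_zero (abs_ne_zero.mpr ht), log_abs]
  rw [← hlim]
  refine Tendsto.log (Continuous.tendsto (by fun_prop) 1) ?_
  rw [Complex.ofReal_one, one_mul, norm_one_add_exp_two_mul]
  positivity

end LogNorm

theorem ae_cos_ne_zero : ∀ᵐ t : ℝ, cos t ≠ 0 := by
  filter_upwards [(countable_range fun k : ℤ ↦ (2 * k + 1) * π / 2).ae_notMem volume] with t ht
  exact cos_ne_zero_iff.mpr fun k hk ↦ ht ⟨k, hk.symm⟩

section WeightedIntegral

variable {w : ℝ → ℝ} {a b : ℝ}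

theorem hasSum_integral_mul_log_norm_one_add_mul_exp (hw : IntervalIntegrable w volume a b)
    {r : ℝ} (hr : |r| < 1) :
    HasSum (fun n : ℕ ↦ (-1) ^ (n + 1) / n * (∫ t in a..b, w t * cos (n * (2 * t))) * r ^ n)
      (∫ t in a..b, w t * log ‖1 + r * Complex.exp ((2 * t : ℝ) * Complex.I)‖) := by
  have hcoeff (n : ℕ) : |(-1 : ℝ) ^ (n + 1) / n| ≤ 1 := by
    rw [abs_div, abs_neg_one_pow, Nat.abs_cast, one_div]
    exact Nat.cast_inv_le_one n
  have hsum := intervalIntegral.hasSum_integral_of_dominated_convergence (μ := volume)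
    (F := fun (n : ℕ) t ↦ w t * ((-1) ^ (n + 1) / n * r ^ n * cos (n * (2 * t))))
    (fun n t ↦ |w t| * |r| ^ n)
    (fun n ↦ hw.def'.aestronglyMeasurable.mul (Continuous.aestronglyMeasurable (by fun_prop)))
    (fun n ↦ .of_forall fun t _ ↦ ?_)
    (.of_forall fun t _ ↦ (summable_geometric_of_lt_one (abs_nonneg r) hr).mul_left _)
    (by simpa only [tsum_mul_left] using hw.abs.mul_const _)
    (.of_forall fun t _ ↦ (hasSum_log_norm_one_add_mul_exp hr (2 * t)).mul_left _)
  · refine hsum.congr_fun fun n ↦ ?_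
    rw [mul_right_comm, ← intervalIntegral.integral_const_mul]
    exact intervalIntegral.integral_congr fun t _ ↦ by ring
  · calc ‖w t * ((-1) ^ (n + 1) / n * r ^ n * cos (n * (2 * t)))‖
        = |w t| * (|(-1 : ℝ) ^ (n + 1) / n| * |r| ^ n * |cos (n * (2 * t))|) := by
          rw [norm_eq_abs, abs_mul, abs_mul, abs_mul, abs_pow]
      _ ≤ |w t| * (1 * |r| ^ n * 1) := by
          gcongr
          exacts [hcoeff n, abs_cos_le_one _]
      _ = |w t| * |r| ^ n := by rw [one_mul, mul_one]

theorem tendsto_integral_mul_log_norm_one_add_mul_exp (hw : IntervalIntegrable w volume a b)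
    (hwlog : IntervalIntegrable (fun t ↦ w t * log (cos t)) volume a b) :
    Tendsto (fun r : ℝ ↦
        ∫ t in a..b, w t * log ‖1 + r * Complex.exp ((2 * t : ℝ) * Complex.I)‖)
      (𝓝[<] 1) (𝓝 (∫ t in a..b, w t * (log 2 + log (cos t)))) := by
  refine intervalIntegral.tendsto_integral_filter_of_dominated_convergence
    (fun t ↦ |w t| * log 2 + |w t * log (cos t)|) (.of_forall fun r ↦ ?_) ?_
    ((hw.abs.mul_const _).add hwlog.abs) ?_
  · exact hw.def'.aestronglyMeasurable.mul (Measurable.aestronglyMeasurable (by fun_prop))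
  · filter_upwards [Ioo_mem_nhdsLT zero_lt_one] with r hr
    filter_upwards [ae_cos_ne_zero] with t ht _
    rw [norm_eq_abs, abs_mul, abs_mul, ← mul_add]
    gcongr
    exact abs_log_norm_one_add_mul_exp_le hr.1.le hr.2.le ht
  · filter_upwards [ae_cos_ne_zero] with t ht _
    exact ((tendsto_log_norm_one_add_mul_exp ht).mono_left nhdsWithin_le_nhds).const_mul _

theorem integral_mul_log_cos_of_tendsto (hw : IntervalIntegrable w volume a b)
    (hwlog : IntervalIntegrable (fun t ↦ w t * log (cos t)) volume a b) {s : ℝ}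
    (hs : Tendsto (fun N ↦ ∑ n ∈ Finset.range N,
      (-1) ^ (n + 1) / n * ∫ t in a..b, w t * cos (n * (2 * t))) atTop (𝓝 s)) :
    ∫ t in a..b, w t * log (cos t) = s - (∫ t in a..b, w t) * log 2 := by
  have hseries : (fun r : ℝ ↦
        ∫ t in a..b, w t * log ‖1 + r * Complex.exp ((2 * t : ℝ) * Complex.I)‖) =ᶠ[𝓝[<] 1]
      fun r ↦ ∑' n : ℕ, (-1) ^ (n + 1) / n * (∫ t in a..b, w t * cos (n * (2 * t))) * r ^ n := by
    filter_upwards [Ioo_mem_nhdsLT (show (-1 : ℝ) < 1 by norm_num)] with r hr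
    exact (hasSum_integral_mul_log_norm_one_add_mul_exp hw (abs_lt.mpr hr)).tsum_eq.symm
  have habel : ∫ t in a..b, w t * (log 2 + log (cos t)) = s :=
    tendsto_nhds_unique
      ((tendsto_integral_mul_log_norm_one_add_mul_exp hw hwlog).congr' hseries)
      (Real.tendsto_tsum_powerSeries_nhdsWithin_lt hs)
  simp only [mul_add] at habel
  rw [intervalIntegral.integral_add (hw.mul_const _) hwlog,
    intervalIntegral.integral_mul_const] at habel
  exact eq_sub_of_add_eq' habel

end WeightedIntegral

theorem integral_id_mul_cos_mul {c : ℝ} (hc : c ≠ 0) (a b : ℝ) :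
    ∫ t in a..b, t * cos (c * t) =
      (b * sin (c * b) / c + cos (c * b) / c ^ 2) -
        (a * sin (c * a) / c + cos (c * a) / c ^ 2) := by
  refine intervalIntegral.integral_eq_sub_of_hasDerivAt
    (f := fun t ↦ t * sin (c * t) / c + cos (c * t) / c ^ 2) (fun t _ ↦ ?_)
    (Continuous.intervalIntegrable (by fun_prop) _ _)
  have hlin : HasDerivAt (fun t ↦ c * t) c t := by simpa using (hasDerivAt_id t).const_mul c
  convert! (((hasDerivAt_id t).mul hlin.sin).div_const c).add (hlin.cos.div_const (c ^ 2)) using 1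
  simp only [id]
  field_simp
  ring

theorem integral_id_mul_cos_two_mul_nat {n : ℕ} (hn : n ≠ 0) :
    ∫ t in (0 : ℝ)..π / 2, t * cos (n * (2 * t)) = ((-1) ^ n - 1) / (4 * n ^ 2) := by
  have hc : (n : ℝ) * 2 ≠ 0 := mul_ne_zero (Nat.cast_ne_zero.mpr hn) two_ne_zero
  simp only [← mul_assoc]
  rw [integral_id_mul_cos_mul hc, mul_assoc (n : ℝ), mul_div_cancel₀ π two_ne_zero,
    sin_nat_mul_pi, cos_nat_mul_pi, mul_zero, mul_zero, cos_zero]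
  ring

theorem hasSum_one_sub_neg_one_pow_mul_one_div_pow {p : ℕ} (hp : 1 < p) :
    HasSum (fun n : ℕ ↦ (1 - (-1) ^ n) * (1 / (n : ℝ) ^ p))
      (2 * (1 - 1 / 2 ^ p) * ∑' n : ℕ, 1 / (n : ℝ) ^ p) := by
  set f : ℕ → ℝ := fun n ↦ 1 / (n : ℝ) ^ p
  have hf : Summable f := summable_one_div_nat_pow.mpr hp
  have heven : HasSum (fun n ↦ f (2 * n)) (1 / 2 ^ p * ∑' n, f n) := by
    refine (hf.hasSum.mul_left _).congr_fun fun n ↦ ?_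
    simp only [f]
    rw [Nat.cast_mul, Nat.cast_two, mul_pow, one_div_mul_one_div]
  have hodd : Summable fun n ↦ f (2 * n + 1) := hf.comp_injective fun m n h ↦ by lia
  have hodd_tsum : ∑' n, f (2 * n + 1) = (1 - 1 / 2 ^ p) * ∑' n, f n := by
    linarith [tsum_even_add_odd heven.summable hodd, heven.tsum_eq]
  rw [mul_assoc, ← hodd_tsum, ← zero_add (2 * _)]
  refine HasSum.even_add_odd ?_ ?_
  · simp [hasSum_zero]
  · refine (hodd.hasSum.mul_left 2).congr_fun fun n ↦ ?_
    rw [Odd.neg_one_pow ⟨n, rfl⟩]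
    ring

theorem tsum_one_div_nat_add_one_pow {p : ℕ} (hp : 1 < p) :
    ∑' n : ℕ, 1 / ((n : ℝ) + 1) ^ p = ∑' n : ℕ, 1 / (n : ℝ) ^ p := by
  rw [(summable_one_div_nat_pow.mpr hp).tsum_eq_zero_add]
  simp [(zero_lt_one.trans hp).ne']

theorem stmt12 :
    (∫ t in (0:ℝ)..(π/2), t * Real.log (Real.cos t)) =
      -(π^2/8) * Real.log 2 - (7/16) * ∑' k : ℕ, 1 / ((k:ℝ)+1)^3 := by
  have hmoment (n : ℕ) : (-1) ^ (n + 1) / n * (∫ t in (0 : ℝ)..π / 2, t * cos (n * (2 * t))) =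
      -(1 / 4) * ((1 - (-1) ^ n) * (1 / (n : ℝ) ^ 3)) := by
    rcases eq_or_ne n 0 with rfl | hn
    · simp
    rw [integral_id_mul_cos_two_mul_nat hn]
    have hsq : ((-1 : ℝ) ^ n) ^ 2 = 1 := by rw [pow_right_comm, neg_one_sq, one_pow]
    field_simp
    linear_combination -hsq
  have hsum := (hasSum_one_sub_neg_one_pow_mul_one_div_pow (p := 3) (by norm_num)).mul_left
    (-(1 / 4))
  simp only [← hmoment] at hsum
  rw [integral_mul_log_cos_of_tendsto intervalIntegral.intervalIntegrable_id
    (intervalIntegrable_log_cos.continuousOn_mul continuousOn_id) hsum.tendsto_sum_nat,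
    integral_id, tsum_one_div_nat_add_one_pow (by norm_num)]
  ring
end

section
/- ∫_0^{π/2} ξ(t)² dt = π·(2ζ(3) − (π²+1)/6), where ξ(t) = 1 + 2t·tan t + (t² − π²/4)·sec²t on [0, π/2) and ξ(π/2) = 0. -/
open Real

open Set Filter Topology MeasureTheory

/-! Put `s = π/2 - t`, so that `ξ(t)` is the `s`-derivative of `s - s (s - π) cot s`. With
`p(s) = s (s - π)`, the square of this derivative equals `1 - π²/3 + (4/3) p p' cot` up to the
derivative of a cubic polynomial in `cot s`; the `cot²` terms cancel because `p'' = 2`, and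
`p'² - 4p = π²` is the discriminant of `p`. Finally `p p'` is `2π³` times the third Bernoulli
polynomial at `s/π`, so its Fourier series is `3 ∑ sin (2ns) / n³`; integrating term by term
against `cot`, each `sin (2ns)` contributes `π/2`, which yields `ζ(3)`. -/

theorem sin_ne_zero_of_mem_Ioo {s : ℝ} (hs : s ∈ Ioo 0 π) : sin s ≠ 0 :=
  (sin_pos_of_mem_Ioo hs).ne'

theorem hasDerivAt_cot {s : ℝ} (hs : sin s ≠ 0) : HasDerivAt cot (-(1 + cot s ^ 2)) s := by
  have hquot := (hasDerivAt_cos s).div (hasDerivAt_sin s) hs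
  rw [show cos / sin = cot from funext fun x => (cot_eq_cos_div_sin x).symm] at hquot
  convert! hquot using 1
  rw [cot_eq_cos_div_sin]
  field_simp
  ring

/-- The regular part `1/s - cot s` of the cotangent at its pole `0`. Both terms take the junk
value `0` at `s = 0`, which makes it continuous there. -/
noncomputable def invSubCot (s : ℝ) : ℝ := s⁻¹ - cot s

theorem cot_eq_one_sub_mul_invSubCot_div {s : ℝ} (hs : s ≠ 0) :
    cot s = (1 - s * invSubCot s) / s := by
  rw [invSubCot]
  field_simp
  ring

@[simp]
theorem invSubCot_zero : invSubCot 0 = 0 := by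
  simp [invSubCot, cot_eq_cos_div_sin]

theorem invSubCot_nonneg {s : ℝ} (hs : s ∈ Ioo 0 (π / 2)) : 0 ≤ invSubCot s := by
  rw [invSubCot, sub_nonneg, ← tan_inv_eq_cot]
  exact inv_anti₀ hs.1 (lt_tan hs.1 hs.2).le

theorem invSubCot_le_half {s : ℝ} (hs : s ∈ Ioo 0 (π / 2)) : invSubCot s ≤ s / 2 := by
  have hsin : 0 < sin s := sin_pos_of_mem_Ioo ⟨hs.1, by linarith [hs.2, pi_pos]⟩
  have hcos : 0 ≤ cos s := (cos_pos_of_mem_Ioo ⟨by linarith [hs.1, pi_pos], hs.2⟩).le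
  calc invSubCot s = s⁻¹ - cos s / sin s := by rw [invSubCot, cot_eq_cos_div_sin]
    _ ≤ s⁻¹ - cos s / s := by gcongr; exact (sin_lt hs.1).le
    _ = (1 - cos s) / s := by ring
    _ ≤ (s ^ 2 / 2) / s := by
      have := hs.1
      gcongr
      linarith [one_sub_sq_div_two_le_cos (x := s)]
    _ = s / 2 := by have := hs.1.ne'; field_simp

theorem tendsto_invSubCot_zero : Tendsto invSubCot (𝓝[>] 0) (𝓝 0) := by
  have hmem : Ioo 0 (π / 2) ∈ 𝓝[>] (0 : ℝ) := Ioo_mem_nhdsGT (by positivity)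
  have hhalf : Tendsto (fun s : ℝ => s / 2) (𝓝[>] 0) (𝓝 0) :=
    ((continuous_id.div_const 2).tendsto' 0 0 (by simp)).mono_left nhdsWithin_le_nhds
  exact squeeze_zero' (eventually_of_mem hmem fun _ => invSubCot_nonneg)
    (eventually_of_mem hmem fun _ => invSubCot_le_half) hhalf

theorem continuousOn_invSubCot : ContinuousOn invSubCot (Ico 0 π) := by
  intro s hs
  rcases hs.1.eq_or_lt with rfl | hpos
  · rw [← Ioo_insert_left pi_pos, continuousWithinAt_insert_self, ContinuousWithinAt,
      invSubCot_zero]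
    exact tendsto_invSubCot_zero.mono_left (nhdsWithin_mono 0 Ioo_subset_Ioi_self)
  · have hcot := (hasDerivAt_cot (sin_ne_zero_of_mem_Ioo ⟨hpos, hs.2⟩)).continuousAt
    exact ((continuousAt_inv₀ hpos.ne').sub hcot).continuousWithinAt

theorem continuousOn_invSubCot_uIcc {b : ℝ} (hb₀ : 0 ≤ b) (hb : b < π) :
    ContinuousOn invSubCot (uIcc 0 b) := by
  rw [uIcc_of_le hb₀]
  exact continuousOn_invSubCot.mono fun s hs => ⟨hs.1, hs.2.trans_lt hb⟩

theorem intervalIntegrable_mul_mul_cot {q : ℝ → ℝ} {b : ℝ} (hq : ContinuousOn q (uIcc 0 b))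
    (hb₀ : 0 ≤ b) (hb : b < π) : IntervalIntegrable (fun s => s * q s * cot s) volume 0 b := by
  have hcont := continuousOn_invSubCot_uIcc hb₀ hb
  have hext : ContinuousOn (fun s => q s * (1 - s * invSubCot s)) (uIcc 0 b) := by fun_prop
  refine hext.intervalIntegrable.congr_uIoo fun s hs => ?_
  rw [uIoo_of_le hb₀] at hs
  have hs₀ := hs.1.ne'
  simp only [cot_eq_one_sub_mul_invSubCot_div hs₀]
  field_simp

theorem sin_two_mul_nat_mul_mul_cot {s : ℝ} (hs : sin s ≠ 0) (n : ℕ) :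
    sin (2 * n * s) * cot s =
      ∑ k ∈ Finset.range n, (cos (2 * k * s) + cos (2 * (k + 1) * s)) := by
  induction n with
  | zero => simp
  | succ n ih =>
    rw [Finset.sum_range_succ, ← ih, cot_eq_cos_div_sin]
    push_cast
    rw [show 2 * ((n : ℝ) + 1) * s = 2 * n * s + 2 * s by ring, sin_add, cos_add, sin_two_mul,
      cos_two_mul']
    field_simp
    linear_combination (sin (2 * n * s) * cos s + cos (2 * n * s) * sin s) * sin_sq_add_cos_sq s

theorem abs_sin_two_mul_nat_mul_mul_cot_le {s : ℝ} (hs : sin s ≠ 0) (n : ℕ) :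
    |sin (2 * n * s) * cot s| ≤ 2 * n := by
  rw [sin_two_mul_nat_mul_mul_cot hs]
  calc |∑ k ∈ Finset.range n, (cos (2 * k * s) + cos (2 * (k + 1) * s))|
      ≤ ∑ k ∈ Finset.range n, |cos (2 * k * s) + cos (2 * (k + 1) * s)| :=
        Finset.abs_sum_le_sum_abs _ _
    _ ≤ ∑ _k ∈ Finset.range n, (2 : ℝ) := by
        gcongr with k
        linarith [abs_add_le (cos (2 * k * s)) (cos (2 * (k + 1) * s)),
          abs_cos_le_one (2 * k * s), abs_cos_le_one (2 * (k + 1) * s)]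
    _ = 2 * n := by simp [mul_comm]

theorem integral_cos_two_mul_nat_mul {n : ℕ} (hn : n ≠ 0) :
    ∫ s in (0 : ℝ)..(π / 2), cos (2 * n * s) = 0 := by
  rw [intervalIntegral.integral_comp_mul_left _ (by positivity), integral_cos,
    show 2 * n * (π / 2) = n * π by ring]
  simp

theorem integral_sin_two_mul_succ_mul_mul_cot (n : ℕ) :
    ∫ s in (0 : ℝ)..(π / 2), sin (2 * (n + 1 : ℕ) * s) * cot s = π / 2 := by
  have hcos (k : ℕ) : ∫ s in (0 : ℝ)..(π / 2), (cos (2 * k * s) + cos (2 * (k + 1) * s)) =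
      if k = 0 then π / 2 else 0 := by
    have hsucc := integral_cos_two_mul_nat_mul k.succ_ne_zero
    push_cast at hsucc
    rw [intervalIntegral.integral_add (Continuous.intervalIntegrable (by fun_prop) _ _)
      (Continuous.intervalIntegrable (by fun_prop) _ _), hsucc, add_zero]
    split_ifs with hk
    · simp [hk]
    · exact integral_cos_two_mul_nat_mul hk
  have hexpand : EqOn (fun s => sin (2 * (n + 1 : ℕ) * s) * cot s)
      (fun s => ∑ k ∈ Finset.range (n + 1), (cos (2 * k * s) + cos (2 * (k + 1) * s)))
      (Ioo 0 (π / 2)) := fun s hs =>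
    sin_two_mul_nat_mul_mul_cot
      (sin_ne_zero_of_mem_Ioo ⟨hs.1, hs.2.trans (half_lt_self pi_pos)⟩) (n + 1)
  rw [intervalIntegral.integral_congr_Ioo_of_le (by positivity) hexpand,
    intervalIntegral.integral_finsetSum
      fun k _ => Continuous.intervalIntegrable (by fun_prop) _ _]
  simp [hcos]

theorem hasSum_integral_mul_cot_of_hasSum_sin {b : ℕ → ℝ} {f : ℝ → ℝ}
    (hb : Summable fun n => |b n| * (2 * (n + 1 : ℕ)))
    (hf : ∀ s ∈ Ioc 0 (π / 2), HasSum (fun n => b n * sin (2 * (n + 1 : ℕ) * s)) (f s)) :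
    HasSum (fun n => b n * (π / 2)) (∫ s in (0 : ℝ)..(π / 2), f s * cot s) := by
  have huIoc : uIoc 0 (π / 2) = Ioc 0 (π / 2) := uIoc_of_le (by positivity)
  have hmeas (n : ℕ) : Measurable fun s => b n * (sin (2 * (n + 1 : ℕ) * s) * cot s) := by
    simp only [cot_eq_cos_div_sin]
    fun_prop
  have hbound (n : ℕ) (s : ℝ) (hs : s ∈ uIoc 0 (π / 2)) :
      ‖b n * (sin (2 * (n + 1 : ℕ) * s) * cot s)‖ ≤ |b n| * (2 * (n + 1 : ℕ)) := by
    rw [huIoc] at hs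
    rw [norm_mul, norm_eq_abs, norm_eq_abs]
    gcongr
    exact abs_sin_two_mul_nat_mul_mul_cot_le
      (sin_ne_zero_of_mem_Ioo ⟨hs.1, hs.2.trans_lt (half_lt_self pi_pos)⟩) (n + 1)
  have hsum := intervalIntegral.hasSum_integral_of_dominated_convergence
    (μ := volume) (a := 0) (b := π / 2) (f := fun s => f s * cot s)
    (fun n _ => |b n| * (2 * (n + 1 : ℕ)))
    (fun n => (hmeas n).aestronglyMeasurable) (fun n => ae_of_all _ (hbound n))
    (ae_of_all _ fun _ _ => hb) intervalIntegrable_const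
    (ae_of_all _ fun s hs => by
      simpa only [mul_assoc] using (hf s (huIoc ▸ hs)).mul_right (cot s))
  simpa only [intervalIntegral.integral_const_mul, integral_sin_two_mul_succ_mul_mul_cot] using hsum

open scoped Nat in
theorem hasSum_one_div_pow_mul_sin_two_mul {k : ℕ} (hk : k ≠ 0) {s : ℝ} (hs : s ∈ Icc 0 π) :
    HasSum (fun n : ℕ => 1 / ((n : ℝ) + 1) ^ (2 * k + 1) * sin (2 * (n + 1 : ℕ) * s))
      ((-1) ^ (k + 1) * (2 * π) ^ (2 * k + 1) / 2 / (2 * k + 1)! *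
        ((Polynomial.bernoulli (2 * k + 1)).map (algebraMap ℚ ℝ)).eval (s / π)) := by
  have hmem : s / π ∈ Icc (0 : ℝ) 1 := ⟨div_nonneg hs.1 pi_pos.le, (div_le_one pi_pos).2 hs.2⟩
  have hseries := (hasSum_nat_add_iff' 1).2 (hasSum_one_div_nat_pow_mul_sin hk hmem)
  simp only [Finset.sum_range_one, Nat.cast_zero, mul_zero, zero_mul, sin_zero, sub_zero]
    at hseries
  refine hseries.congr_fun fun n => ?_
  rw [show 2 * π * (n + 1 : ℕ) * (s / π) = 2 * (n + 1 : ℕ) * s by field_simp]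
  push_cast
  rfl

theorem summable_one_div_pow_mul_two_mul {k : ℕ} (hk : k ≠ 0) :
    Summable fun n : ℕ => |1 / ((n : ℝ) + 1) ^ (2 * k + 1)| * (2 * (n + 1 : ℕ)) := by
  have hzeta : Summable fun n : ℕ => 1 / ((n + 1 : ℕ) : ℝ) ^ (2 * k) :=
    (summable_nat_add_iff 1).2 (summable_one_div_nat_pow.2 (by lia))
  refine (hzeta.mul_left 2).congr fun n => ?_
  rw [abs_of_pos (by positivity), pow_succ]
  push_cast
  field_simp

open scoped Nat in
theorem hasSum_one_div_pow_integral_bernoulli_mul_cot {k : ℕ} (hk : k ≠ 0) :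
    HasSum (fun n : ℕ => 1 / ((n : ℝ) + 1) ^ (2 * k + 1))
      ((-1) ^ (k + 1) * (2 * π) ^ (2 * k + 1) / (2 * k + 1)! / π *
        ∫ s in (0 : ℝ)..(π / 2),
          ((Polynomial.bernoulli (2 * k + 1)).map (algebraMap ℚ ℝ)).eval (s / π) * cot s) := by
  have hsum := (hasSum_integral_mul_cot_of_hasSum_sin (summable_one_div_pow_mul_two_mul hk)
    fun s hs => hasSum_one_div_pow_mul_sin_two_mul hk
      ⟨hs.1.le, hs.2.trans (half_le_self pi_pos.le)⟩).div_const (π / 2)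
  simp only [mul_assoc, intervalIntegral.integral_const_mul] at hsum
  convert! hsum using 1
  · ext n
    field_simp
  · field_simp

theorem eval_bernoulli_three (x : ℝ) :
    ((Polynomial.bernoulli 3).map (algebraMap ℚ ℝ)).eval x = x * (x - 1) * (2 * x - 1) / 2 := by
  have hbernoulli_three : bernoulli 3 = 0 := bernoulli_eq_zero_of_odd (by decide) (by norm_num)
  simp only [Polynomial.bernoulli, Finset.sum_range_succ, Finset.sum_range_zero,
    Polynomial.map_add, Polynomial.map_monomial, Polynomial.eval_add, Polynomial.eval_monomial,
    bernoulli_zero, bernoulli_one, bernoulli_two, hbernoulli_three]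
  norm_num [Nat.choose]
  ring

theorem integral_mul_sub_pi_mul_two_mul_sub_pi_mul_cot :
    ∫ s in (0 : ℝ)..(π / 2), s * (s - π) * (2 * s - π) * cot s =
      3 * π / 2 * ∑' k : ℕ, 1 / ((k : ℝ) + 1) ^ 3 := by
  have hpoly (s : ℝ) : s * (s - π) * (2 * s - π) * cot s = 2 * π ^ 3 *
      (((Polynomial.bernoulli 3).map (algebraMap ℚ ℝ)).eval (s / π) * cot s) := by
    rw [eval_bernoulli_three]
    field_simp
  have hzeta : ∑' k : ℕ, 1 / ((k : ℝ) + 1) ^ 3 = (-1) ^ 2 * (2 * π) ^ 3 / (3).factorial / π *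
      ∫ s in (0 : ℝ)..(π / 2),
        ((Polynomial.bernoulli 3).map (algebraMap ℚ ℝ)).eval (s / π) * cot s :=
    (hasSum_one_div_pow_integral_bernoulli_mul_cot one_ne_zero).tsum_eq
  simp only [hpoly, intervalIntegral.integral_const_mul, hzeta, Nat.factorial]
  push_cast
  field_simp
  ring

section SquareIntegral

variable (a : ℝ) {s b : ℝ}

/-- The derivative of `s - s (s - a) cot s`. For `a = π` this is `ξ (π/2 - s)`. -/
noncomputable def reflectedXi (s : ℝ) : ℝ :=
  1 - (2 * s - a) * cot s + s * (s - a) * (1 + cot s ^ 2)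

/-- The part of a primitive of `reflectedXi a ^ 2` that is polynomial in `s` and `cot s`, found by
matching powers of `cot s`. -/
noncomputable def reflectedXiSqPrimitive (s : ℝ) : ℝ :=
  -(s * (s - a)) ^ 2 / 3 * cot s ^ 3 + 2 * (s * (s - a)) * (2 * s - a) / 3 * cot s ^ 2 -
    ((2 * s - a) ^ 2 / 3 + 2 * (s * (s - a)) / 3 + (s * (s - a)) ^ 2) * cot s

theorem reflectedXi_eq_invSubCot (hs : s ≠ 0) :
    reflectedXi a s =
      s * (s - a) + (s * invSubCot s) ^ 2 + a * (1 - s * invSubCot s) * invSubCot s := by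
  rw [reflectedXi, cot_eq_one_sub_mul_invSubCot_div hs]
  field_simp
  ring

theorem reflectedXiSqPrimitive_eq_invSubCot (hs : s ≠ 0) :
    reflectedXiSqPrimitive a s =
      2 * a / 3 * (1 - (s * invSubCot s) ^ 3) - s * (1 - s * invSubCot s) *
        ((s - a) ^ 2 + (a ^ 2 * invSubCot s ^ 2 + (s * invSubCot s + 1) ^ 2 + 2) / 3) := by
  rw [reflectedXiSqPrimitive, cot_eq_one_sub_mul_invSubCot_div hs]
  field_simp
  ring

theorem hasDerivAt_reflectedXiSqPrimitive (hs : sin s ≠ 0) :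
    HasDerivAt (reflectedXiSqPrimitive a)
      (reflectedXi a s ^ 2 - (1 - a ^ 2 / 3) - 4 / 3 * (s * (s - a) * (2 * s - a) * cot s)) s := by
  have hid := hasDerivAt_id' s
  have hc := hasDerivAt_cot hs
  have hp : HasDerivAt (fun x => x * (x - a)) (2 * s - a) s := by
    convert! hid.mul (hid.sub_const a) using 1
    ring
  have hp' : HasDerivAt (fun x => 2 * x - a) 2 s := by
    simpa using (hid.const_mul 2).sub_const a
  have hcubic := ((hp.pow 2).neg.div_const 3).mul (hc.pow 3)
  have hquadratic := (((hp.const_mul 2).mul hp').div_const 3).mul (hc.pow 2)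
  have hlinear := ((((hp'.pow 2).div_const 3).add ((hp.const_mul 2).div_const 3)).add
    (hp.pow 2)).mul hc
  convert! (hcubic.add hquadratic).sub hlinear using 1
  simp only [reflectedXi, Pi.pow_apply, Pi.neg_apply, Pi.mul_apply, Pi.add_apply]
  push_cast
  ring

theorem tendsto_reflectedXiSqPrimitive_zero :
    Tendsto (reflectedXiSqPrimitive a) (𝓝[>] 0) (𝓝 (2 * a / 3)) := by
  let P : ℝ × ℝ → ℝ := fun x => 2 * a / 3 * (1 - (x.1 * x.2) ^ 3) - x.1 * (1 - x.1 * x.2) *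
    ((x.1 - a) ^ 2 + (a ^ 2 * x.2 ^ 2 + (x.1 * x.2 + 1) ^ 2 + 2) / 3)
  have hP : Tendsto P (𝓝 (0, 0)) (𝓝 (2 * a / 3)) :=
    Continuous.tendsto' (by fun_prop) _ _ (by simp [P])
  have hid : Tendsto (fun s : ℝ => s) (𝓝[>] 0) (𝓝 0) := tendsto_id.mono_left nhdsWithin_le_nhds
  refine (hP.comp (hid.prodMk_nhds tendsto_invSubCot_zero)).congr' ?_
  filter_upwards [self_mem_nhdsWithin] with s hs
  exact (reflectedXiSqPrimitive_eq_invSubCot a hs.ne').symm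

theorem intervalIntegrable_reflectedXi_sq (hb₀ : 0 ≤ b) (hb : b < π) :
    IntervalIntegrable (fun s => reflectedXi a s ^ 2) volume 0 b := by
  have hcont := continuousOn_invSubCot_uIcc hb₀ hb
  have hext : ContinuousOn (fun s => (s * (s - a) + (s * invSubCot s) ^ 2 +
      a * (1 - s * invSubCot s) * invSubCot s) ^ 2) (uIcc 0 b) := by fun_prop
  refine hext.intervalIntegrable.congr_uIoo fun s hs => ?_
  rw [uIoo_of_le hb₀] at hs
  simp only [reflectedXi_eq_invSubCot a hs.1.ne']

theorem integral_reflectedXi_sq (hb₀ : 0 < b) (hb : b < π) :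
    ∫ s in (0 : ℝ)..b, reflectedXi a s ^ 2 =
      reflectedXiSqPrimitive a b - 2 * a / 3 + (1 - a ^ 2 / 3) * b +
        4 / 3 * ∫ s in (0 : ℝ)..b, s * (s - a) * (2 * s - a) * cot s := by
  have hXi := intervalIntegrable_reflectedXi_sq a hb₀.le hb
  have hconst : IntervalIntegrable (fun _ : ℝ => 1 - a ^ 2 / 3) volume 0 b :=
    intervalIntegrable_const
  have hcot : IntervalIntegrable (fun s => 4 / 3 * (s * (s - a) * (2 * s - a) * cot s))
      volume 0 b := by
    simpa only [mul_assoc] using (intervalIntegrable_mul_mul_cot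
      (q := fun s => (s - a) * (2 * s - a)) (by fun_prop) hb₀.le hb).const_mul (4 / 3)
  have hderiv (s : ℝ) (hs₀ : 0 < s) (hs : s < π) :=
    hasDerivAt_reflectedXiSqPrimitive a (sin_ne_zero_of_mem_Ioo ⟨hs₀, hs⟩)
  have hftc := intervalIntegral.integral_eq_sub_of_hasDerivAt_of_tendsto hb₀
    (fun s hs => hderiv s hs.1 (hs.2.trans hb)) ((hXi.sub hconst).sub hcot)
    (tendsto_reflectedXiSqPrimitive_zero a)
    ((hderiv b hb₀ hb).continuousAt.tendsto.mono_left nhdsWithin_le_nhds)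
  rw [intervalIntegral.integral_sub (hXi.sub hconst) hcot,
    intervalIntegral.integral_sub hXi hconst, intervalIntegral.integral_const,
    intervalIntegral.integral_const_mul, smul_eq_mul] at hftc
  linarith

end SquareIntegral

theorem reflectedXi_pi_pi_div_two_sub {t : ℝ} (ht : cos t ≠ 0) :
    reflectedXi π (π / 2 - t) =
      1 + 2 * t * tan t + (t ^ 2 - π ^ 2 / 4) * (1 / cos t) ^ 2 := by
  have hcot : cot (π / 2 - t) = tan t := by
    rw [cot_eq_cos_div_sin, cos_pi_div_two_sub, sin_pi_div_two_sub, tan_eq_sin_div_cos]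
  have hsec : (1 / cos t) ^ 2 = 1 + tan t ^ 2 := by
    rw [one_div, inv_pow, ← inv_one_add_tan_sq ht, inv_inv]
  rw [reflectedXi, hcot, hsec]
  ring

theorem reflectedXiSqPrimitive_pi_div_two (a : ℝ) : reflectedXiSqPrimitive a (π / 2) = 0 := by
  simp [reflectedXiSqPrimitive, cot_eq_cos_div_sin]

theorem stmt16 (ξ : ℝ → ℝ)
    (hξ : ∀ t, t < π/2 →
      ξ t = 1 + 2 * t * Real.tan t + (t^2 - π^2/4) * (1 / Real.cos t)^2)
    (hξ' : ξ (π/2) = 0) :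
    (∫ t in (0:ℝ)..(π/2), ξ t ^ 2) =
      π * (2 * (∑' k : ℕ, 1 / ((k:ℝ)+1)^3) - (π^2 + 1) / 6) := by
  have hreflect : EqOn (fun t => ξ t ^ 2) (fun t => reflectedXi π (π / 2 - t) ^ 2)
      (Ioo 0 (π / 2)) := fun t ht => by
    have hcos : cos t ≠ 0 := (cos_pos_of_mem_Ioo ⟨by linarith [ht.1, pi_pos], ht.2⟩).ne'
    simp only [hξ t ht.2, reflectedXi_pi_pi_div_two_sub hcos]
  calc ∫ t in (0:ℝ)..(π/2), ξ t ^ 2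
      = ∫ t in (0:ℝ)..(π/2), reflectedXi π (π / 2 - t) ^ 2 :=
        intervalIntegral.integral_congr_Ioo_of_le (by positivity) hreflect
    _ = ∫ s in (0:ℝ)..(π/2), reflectedXi π s ^ 2 := by
        simp [intervalIntegral.integral_comp_sub_left (fun s => reflectedXi π s ^ 2)]
    _ = π * (2 * (∑' k : ℕ, 1 / ((k:ℝ)+1)^3) - (π^2 + 1) / 6) := by
        rw [integral_reflectedXi_sq π (by positivity) (half_lt_self pi_pos),
          reflectedXiSqPrimitive_pi_div_two, integral_mul_sub_pi_mul_two_mul_sub_pi_mul_cot]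
        ring
end
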